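/- (IC ⇒ PAD.) Every social choice mechanism on an unrestricted parallel utility domain 𝒰 that is DSIC, deterministic, IR and satisfies no subsidy has a choice rule x satisfying positive association of differences (PAD): for all u, u' ∈ 𝒰, if x(u) = a and p'_{i,a} − p_{i,a} > p'_{i,b} − p_{i,b} for all b ≠ a and all agents i, then x(u') = a. -/

import Mathlib

/-!
Common framework: agents indexed by `I`, alternatives `A` (finite, nonempty).
A type of an agent is a family `u : A → ℝ → ℝ`, where `u a z` is the utility
when alternative `a` is selected and the agent pays `z`.
-/

noncomputable section

namespace NQLSC

/-- A type (utility family) of an agent. -/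
abbrev Util (A : Type*) := A → ℝ → ℝ

variable {A I : Type*}

/-- (S1): each `u a` is continuous and strictly decreasing in the payment. -/
def S1 (u : Util A) : Prop := ∀ a, Continuous (u a) ∧ StrictAnti (u a)

/-- `min_{a'∈A} u_{a'}(0)`, the value of the worst alternative at zero payment. -/
def minVal [Fintype A] [Nonempty A] (u : Util A) : ℝ :=
  Finset.univ.inf' Finset.univ_nonempty (fun a => u a 0)

/-- (S2): as the payment tends to `+∞`, the utility of every alternative drops
(strictly) below `min_{a'} u_{a'}(0)`; for strictly decreasing utilities this is
equivalent to the utility being below that value at some payment. -/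
def S2 [Fintype A] [Nonempty A] (u : Util A) : Prop :=
  ∀ a, ∃ z : ℝ, u a z < minVal u

/-- The willingness to pay `p_a = u_a⁻¹(min_{a'} u_{a'}(0))` (under (S1),(S2) this
`sInf` is the unique payment at which `u a` attains `minVal u`). -/
def wtp [Fintype A] [Nonempty A] (u : Util A) (a : A) : ℝ :=
  sInf {z : ℝ | u a z ≤ minVal u}

/-- A parallel type: (S1), (S2), and for all `a, b` with `v_a ≥ v_b` and all
`z ∈ [0, p_b]`, `u_a (z + (p_a − p_b)) = u_b z`. -/
def IsParallel [Fintype A] [Nonempty A] (u : Util A) : Prop :=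
  S1 u ∧ S2 u ∧ ∀ a b : A, u b 0 ≤ u a 0 → ∀ z : ℝ, 0 ≤ z → z ≤ wtp u b →
    u a (z + (wtp u a - wtp u b)) = u b z

/-- Unrestricted willingness to pay: every nonnegative vector with a zero entry is
the willingness-to-pay vector of some type in the domain. -/
def UnrestrictedWTP [Fintype A] [Nonempty A] (U : Set (Util A)) : Prop :=
  ∀ lam : A → ℝ, (∀ a, 0 ≤ lam a) → (∃ a, lam a = 0) →
    ∃ u ∈ U, ∀ a, wtp u a = lam a

/-- Dominant-strategy incentive compatibility of a (deterministic) mechanism `(x,t)`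
on the domain `𝒰 = ∏ i, U i`. -/
def DSIC [DecidableEq I] (U : I → Set (Util A)) (x : (I → Util A) → A)
    (t : (I → Util A) → I → ℝ) : Prop :=
  ∀ uh : I → Util A, (∀ j, uh j ∈ U j) → ∀ i, ∀ ui ∈ U i,
    ui (x uh) (t uh i) ≤
      ui (x (Function.update uh i ui)) (t (Function.update uh i ui) i)

/-- Individual rationality. -/
def IR [Fintype A] [Nonempty A] [DecidableEq I] (U : I → Set (Util A))
    (x : (I → Util A) → A) (t : (I → Util A) → I → ℝ) : Prop :=
  ∀ uh : I → Util A, (∀ j, uh j ∈ U j) → ∀ i, ∀ ui ∈ U i,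
    minVal ui ≤ ui (x (Function.update uh i ui)) (t (Function.update uh i ui) i)

/-- No subsidy: the mechanism never makes positive transfers to an agent. -/
def NoSubsidy (U : I → Set (Util A)) (t : (I → Util A) → I → ℝ) : Prop :=
  ∀ u : I → Util A, (∀ j, u j ∈ U j) → ∀ i, 0 ≤ t u i

/-- Ontoness of the choice rule on the given domain. -/
def OntoMech (U : I → Set (Util A)) (x : (I → Util A) → A) : Prop :=
  ∀ a, ∃ u : I → Util A, (∀ j, u j ∈ U j) ∧ x u = a

/-!
For nonnegative payments, an agent of parallel type who weakly prefers an individually rational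
outcome `(a, r)` to `(b, s)` has a surplus at least as large there: `p_b - s ≤ p_a - r`. A DSIC, IR
and no-subsidy mechanism is therefore incentive compatible for the quasilinear utilities `p_a - z`.
Adding the two incentive constraints between two types of one agent eliminates the payments and
bounds the increase of `p` at the old choice by its increase at the new one; PAD follows by changing
the agents one at a time.
-/

section Surplus

variable [Fintype A] [Nonempty A]

theorem le_wtp {u : Util A} {a : A} {z : ℝ} (hanti : StrictAnti (u a))
    (hbelow : ∃ y, u a y ≤ minVal u) (hz : minVal u ≤ u a z) : z ≤ wtp u a :=
  le_csInf hbelow fun _ hw => hanti.le_iff_ge.1 (hw.trans hz)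

theorem IsParallel.wtp_sub_le_wtp_sub {u : Util A} (hu : IsParallel u) {a b : A} {r s : ℝ}
    (hr : 0 ≤ r) (hs : 0 ≤ s) (hmin : minVal u ≤ u a r) (hle : u b s ≤ u a r) :
    wtp u b - s ≤ wtp u a - r := by
  obtain ⟨hS1, hS2, hshift⟩ := hu
  have hra : r ≤ wtp u a := le_wtp (hS1 a).2 ((hS2 a).imp fun _ => le_of_lt) hmin
  rcases le_or_gt s (wtp u b) with hsb | hsb
  · -- Express both utilities through the more valued alternative; only the payments then differ.
    rcases le_total (u b 0) (u a 0) with hab | hba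
    · rw [← hshift a b hab s hs hsb] at hle
      linarith [(hS1 a).2.le_iff_ge.1 hle]
    · rw [← hshift b a hba r hr hra] at hle
      linarith [(hS1 b).2.le_iff_ge.1 hle]
  · linarith

end Surplus

section Mechanism

variable [Fintype A] [Nonempty A] [DecidableEq I] {U : I → Set (Util A)}
  {x : (I → Util A) → A} {t : (I → Util A) → I → ℝ} {u u' : I → Util A} {i : I} {v : Util A}

theorem DSIC.wtp_sub_le_wtp_sub_update (hDSIC : DSIC U x t) (hIR : IR U x t) (hNS : NoSubsidy U t)
    (hu : ∀ j, u j ∈ U j) (hv : v ∈ U i) (hpar : IsParallel v) :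
    wtp v (x u) - t u i ≤
      wtp v (x (Function.update u i v)) - t (Function.update u i v) i :=
  have hupdate : ∀ j, Function.update u i v j ∈ U j :=
    (Function.forall_update_iff u fun j w => w ∈ U j).2 ⟨hv, fun j _ => hu j⟩
  hpar.wtp_sub_le_wtp_sub (hNS _ hupdate i) (hNS u hu i) (hIR u hu i v hv) (hDSIC u hu i v hv)

theorem DSIC.wtp_sub_wtp_le_update (hDSIC : DSIC U x t) (hIR : IR U x t) (hNS : NoSubsidy U t)
    (hpar : ∀ w ∈ U i, IsParallel w) (hu : ∀ j, u j ∈ U j) (hv : v ∈ U i) :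
    wtp v (x u) - wtp (u i) (x u) ≤
      wtp v (x (Function.update u i v)) - wtp (u i) (x (Function.update u i v)) := by
  have hupdate : ∀ j, Function.update u i v j ∈ U j :=
    (Function.forall_update_iff u fun j w => w ∈ U j).2 ⟨hv, fun j _ => hu j⟩
  have hforth := hDSIC.wtp_sub_le_wtp_sub_update hIR hNS hu hv (hpar v hv)
  have hback := hDSIC.wtp_sub_le_wtp_sub_update hIR hNS hupdate (hu i) (hpar (u i) (hu i))
  rw [Function.update_idem, Function.update_eq_self] at hback
  linarith

theorem DSIC.choice_update_eq (hDSIC : DSIC U x t) (hIR : IR U x t) (hNS : NoSubsidy U t)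
    (hpar : ∀ w ∈ U i, IsParallel w) (hu : ∀ j, u j ∈ U j) (hv : v ∈ U i)
    (hdiff : ∀ b, b ≠ x u → wtp v b - wtp (u i) b < wtp v (x u) - wtp (u i) (x u)) :
    x (Function.update u i v) = x u := by
  by_contra hne
  exact (hdiff _ hne).not_ge (hDSIC.wtp_sub_wtp_le_update hIR hNS hpar hu hv)

theorem DSIC.choice_piecewise_eq (hDSIC : DSIC U x t) (hIR : IR U x t) (hNS : NoSubsidy U t)
    (hpar : ∀ i, ∀ w ∈ U i, IsParallel w) (hu : ∀ j, u j ∈ U j)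
    (hu' : ∀ j, u' j ∈ U j) (S : Finset I)
    (hdiff : ∀ i ∈ S, ∀ b, b ≠ x u →
      wtp (u' i) b - wtp (u i) b < wtp (u' i) (x u) - wtp (u i) (x u)) :
    x (S.piecewise u' u) = x u := by
  induction S using Finset.induction_on with
  | empty => rw [Finset.piecewise_empty]
  | insert i S hi ih =>
    rw [Finset.forall_mem_insert] at hdiff
    specialize ih hdiff.2
    have hmem : ∀ j, S.piecewise u' u j ∈ U j := fun j =>
      S.piecewise_cases u' u (· ∈ U j) (hu' j) (hu j)
    rw [Finset.piecewise_insert, ← ih]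
    apply hDSIC.choice_update_eq hIR hNS (hpar i) hmem (hu' i)
    rw [ih, Finset.piecewise_eq_of_notMem _ _ _ hi]
    exact hdiff.1

theorem pad_of_dsic_general (hpar : ∀ i, ∀ w ∈ U i, IsParallel w)
    (hDSIC : DSIC U x t) (hIR : IR U x t) (hNS : NoSubsidy U t)
    (hu : ∀ j, u j ∈ U j) (hu' : ∀ j, u' j ∈ U j) (hfin : {i | u' i ≠ u i}.Finite)
    {a : A} (hxa : x u = a)
    (hdiff : ∀ i, u' i ≠ u i → ∀ b, b ≠ a →
      wtp (u' i) b - wtp (u i) b < wtp (u' i) a - wtp (u i) a) :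
    x u' = a := by
  subst hxa
  have hpiecewise : hfin.toFinset.piecewise u' u = u' := by
    ext1 i
    by_cases hi : u' i = u i <;> simp [Finset.piecewise, hi]
  rw [← hpiecewise]
  exact hDSIC.choice_piecewise_eq hIR hNS hpar hu hu' _
    fun i hi => hdiff i (hfin.mem_toFinset.1 hi)

end Mechanism

/-- IC ⇒ PAD. On an unrestricted parallel utility domain, every DSIC,
deterministic, IR, no-subsidy mechanism has a choice rule satisfying positive
association of differences. -/
theorem pad_of_dsic
    [Fintype A] [Nonempty A] [Fintype I] [DecidableEq I]
    (U : I → Set (Util A))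
    (hpar : ∀ i, ∀ u ∈ U i, IsParallel u)
    (hunr : ∀ i, UnrestrictedWTP (U i))
    (x : (I → Util A) → A) (t : (I → Util A) → I → ℝ)
    (hDSIC : DSIC U x t) (hIR : IR U x t) (hNS : NoSubsidy U t) :
    ∀ u u' : I → Util A, (∀ j, u j ∈ U j) → (∀ j, u' j ∈ U j) → ∀ a : A,
      x u = a →
      (∀ i, ∀ b : A, b ≠ a →
        wtp (u' i) b - wtp (u i) b < wtp (u' i) a - wtp (u i) a) →
      x u' = a := by
  intro u u' hu hu' a hxa hdiff
  exact pad_of_dsic_general hpar hDSIC hIR hNS hu hu' (Set.toFinite _) hxa fun i _ => hdiff i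
end NQLSC
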